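/- arXiv:1610.00927 — 5 statements merged into one kernel-verified Lean document; each statement's English description precedes it below -/
import Mathlib

section
/- Existence direction of Theorem 2.1: For every constant vector C ∈ ℝ^p, the sequence Y : ℕ → ℝ^m defined by Y_k = Q_p · J_p^k · C + Q · D_k satisfies F · Y_{k+1} = G · Y_k + V_k for all k ≥ 0. -/
open Matrix Finset

/-!
In the coordinates `Y = Q z`, multiplying the equation by the injective `P` decouples it into the
forward recursion `x (k + 1) = J x k + u k` and the recursion `H y (k + 1) = y k + w k`. Iterating
the first from `x 0 = C` gives variation of constants. The second, read as
`y k = -w k + H y (k + 1)`, is iterated towards the future, and the process terminates because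
`H` is nilpotent.
-/

section Recursions

variable {R m : Type*} [Fintype m] [DecidableEq m]

/-- The solution with zero initial value of `x (k + 1) = A x k + u k`, by variation of constants.
The truncated subtraction in the exponent is harmless, since `i < k`. -/
def forwardSum [Semiring R] (A : Matrix m m R) (u : ℕ → m → R) (k : ℕ) : m → R :=
  ∑ i ∈ range k, A ^ (k - i - 1) *ᵥ u i

/-- The Neumann series, truncated after `ν` terms, for the solution of `N y (k + 1) = y k + u k`.
It depends on the present and future values of `u`. -/
def backwardSum [Ring R] (N : Matrix m m R) (ν : ℕ) (u : ℕ → m → R) (k : ℕ) : m → R :=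
  -∑ i ∈ range ν, N ^ i *ᵥ u (k + i)

theorem forwardSum_succ [Semiring R] (A : Matrix m m R) (u : ℕ → m → R) (k : ℕ) :
    forwardSum A u (k + 1) = A *ᵥ forwardSum A u k + u k := by
  have shift : ∀ i ∈ range k, A ^ (k + 1 - i - 1) *ᵥ u i = A *ᵥ A ^ (k - i - 1) *ᵥ u i := by
    intro i hi
    have hik : i < k := mem_range.mp hi
    rw [mulVec_mulVec, ← pow_succ', show k + 1 - i - 1 = k - i - 1 + 1 by lia]
  have last : A ^ (k + 1 - k - 1) *ᵥ u k = u k := by simp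
  rw [forwardSum, forwardSum, sum_range_succ, sum_congr rfl shift, last, mulVec_sum]

theorem pow_mulVec_add_forwardSum_succ [Semiring R] (A : Matrix m m R) (c : m → R)
    (u : ℕ → m → R) (k : ℕ) :
    A ^ (k + 1) *ᵥ c + forwardSum A u (k + 1) =
      A *ᵥ (A ^ k *ᵥ c + forwardSum A u k) + u k := by
  rw [forwardSum_succ, pow_succ', ← mulVec_mulVec, mulVec_add, add_assoc]

theorem mulVec_backwardSum_succ [Ring R] {N : Matrix m m R} {ν : ℕ} (hN : N ^ ν = 0)
    (u : ℕ → m → R) (k : ℕ) :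
    N *ᵥ backwardSum N ν u (k + 1) = backwardSum N ν u k + u k := by
  have shift : N *ᵥ ∑ i ∈ range ν, N ^ i *ᵥ u (k + 1 + i) =
      ∑ i ∈ range ν, N ^ (i + 1) *ᵥ u (k + (i + 1)) := by
    simp only [mulVec_sum, mulVec_mulVec, ← pow_succ', add_assoc, add_comm 1]
  have split_first : ∑ i ∈ range ν, N ^ (i + 1) *ᵥ u (k + (i + 1)) + u k =
      ∑ i ∈ range ν, N ^ i *ᵥ u (k + i) := by
    have h := (sum_range_succ' (fun i ↦ N ^ i *ᵥ u (k + i)) ν).symm.trans (sum_range_succ _ ν)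
    simpa only [hN, zero_mulVec, add_zero, pow_zero, one_mulVec] using h
  rw [backwardSum, backwardSum, mulVec_neg, shift, ← split_first, neg_add, neg_add_cancel_right]

end Recursions

section ChangeOfCoordinates

variable {R l m n ι κ : Type*}

theorem mulVec_mulVec_eq_add_iff_of_injective [NonUnitalSemiring R] [Fintype ι] [Fintype κ]
    [Fintype n] {F G : Matrix ι κ R} {P : Matrix l ι R} {Q : Matrix κ n R}
    (hP : Function.Injective P.mulVec) (z z' : n → R) (v : ι → R) :
    F *ᵥ Q *ᵥ z' = G *ᵥ Q *ᵥ z + v ↔ (P * F * Q) *ᵥ z' = (P * G * Q) *ᵥ z + P *ᵥ v := by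
  simp only [← hP.eq_iff, mulVec_add, mulVec_mulVec, Matrix.mul_assoc]

theorem fromBlocks_mulVec_sumElim_eq_add_iff [Semiring R] [Fintype m] [Fintype n]
    [DecidableEq m] [DecidableEq n] (J : Matrix m m R) (H : Matrix n n R)
    (x x' u : m → R) (y y' w : n → R) :
    fromBlocks 1 0 0 H *ᵥ Sum.elim x' y' =
        fromBlocks J 0 0 1 *ᵥ Sum.elim x y + Sum.elim u w ↔
      x' = J *ᵥ x + u ∧ H *ᵥ y' = y + w := by
  simp [fromBlocks_mulVec, funext_iff]

theorem toCols₁_mulVec_add_mulVec_sumElim [Semiring R] [Fintype m] [Fintype n]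
    (A : Matrix κ (m ⊕ n) R) (x x' : m → R) (y : n → R) :
    A.toCols₁ *ᵥ x + A *ᵥ Sum.elim x' y = A *ᵥ Sum.elim (x + x') y := by
  rw [← fromCols_toCols A]
  simp only [toCols₁_fromCols, fromCols_mulVec_sumElim, mulVec_add, add_assoc]

theorem mulVec_eq_sumElim_toRows [Semiring R] [Fintype ι] (A : Matrix (m ⊕ n) ι R) (v : ι → R) :
    A *ᵥ v = Sum.elim (A.toRows₁ *ᵥ v) (A.toRows₂ *ᵥ v) := by
  rw [← fromRows_mulVec, fromRows_toRows]

end ChangeOfCoordinates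

theorem theorem_2_1_existence_general {R m n ι κ : Type*} [Ring R] [Fintype m] [Fintype n]
    [Fintype ι] [Fintype κ] [DecidableEq m] [DecidableEq n]
    {F G : Matrix ι κ R} {P : Matrix (m ⊕ n) ι R} {Q : Matrix κ (m ⊕ n) R}
    (hP : Function.Injective P.mulVec) {J : Matrix m m R} {H : Matrix n n R} {ν : ℕ}
    (hH : H ^ ν = 0) (hF : P * F * Q = fromBlocks 1 0 0 H) (hG : P * G * Q = fromBlocks J 0 0 1)
    (V : ℕ → ι → R) (C : m → R) {Y : ℕ → κ → R}
    (hY : ∀ k, Y k = Q.toCols₁ *ᵥ J ^ k *ᵥ C +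
      Q *ᵥ Sum.elim (forwardSum J (fun i ↦ P.toRows₁ *ᵥ V i) k)
        (backwardSum H ν (fun i ↦ P.toRows₂ *ᵥ V i) k))
    (k : ℕ) : F *ᵥ Y (k + 1) = G *ᵥ Y k + V k := by
  rw [hY, hY, toCols₁_mulVec_add_mulVec_sumElim, toCols₁_mulVec_add_mulVec_sumElim,
    mulVec_mulVec_eq_add_iff_of_injective hP, hF, hG, mulVec_eq_sumElim_toRows P,
    fromBlocks_mulVec_sumElim_eq_add_iff]
  exact ⟨pow_mulVec_add_forwardSum_succ J C _ k, mulVec_backwardSum_succ hH _ k⟩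

/-- Existence direction of Theorem 2.1: for every constant vector `C ∈ ℝ^p`, the
sequence `Y_k = Q_p · J_p^k · C + Q · D_k` solves `F Y_{k+1} = G Y_k + V_k`. -/
theorem theorem_2_1_existence
    (p q : ℕ) (hp : 1 ≤ p) (hq : 1 ≤ q)
    (F G P Q : Matrix (Fin p ⊕ Fin q) (Fin p ⊕ Fin q) ℝ)
    (hP : IsUnit P) (hQ : IsUnit Q)
    (Jp : Matrix (Fin p) (Fin p) ℝ) (qs : ℕ) (Hq : Matrix (Fin q) (Fin q) ℝ)
    (hH : Hq ^ qs = 0)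
    (hF : P * F * Q = Matrix.fromBlocks 1 0 0 Hq)
    (hG : P * G * Q = Matrix.fromBlocks Jp 0 0 1)
    (Qp : Matrix (Fin p ⊕ Fin q) (Fin p) ℝ) (hQp : Qp = Q.submatrix id Sum.inl)
    (P1 : Matrix (Fin p) (Fin p ⊕ Fin q) ℝ) (hP1 : P1 = P.submatrix Sum.inl id)
    (P2 : Matrix (Fin q) (Fin p ⊕ Fin q) ℝ) (hP2 : P2 = P.submatrix Sum.inr id)
    (V : ℕ → (Fin p ⊕ Fin q) → ℝ)
    (D : ℕ → (Fin p ⊕ Fin q) → ℝ)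
    (hD : ∀ k, D k = Sum.elim
        (∑ i ∈ Finset.range k, (Jp ^ (k - i - 1)).mulVec (P1.mulVec (V i)))
        (-(∑ i ∈ Finset.range qs, (Hq ^ i).mulVec (P2.mulVec (V (k + i))))))
    (C : Fin p → ℝ)
    (Y : ℕ → (Fin p ⊕ Fin q) → ℝ)
    (hY : ∀ k, Y k = Qp.mulVec ((Jp ^ k).mulVec C) + Q.mulVec (D k)) :
    ∀ k, F.mulVec (Y (k + 1)) = G.mulVec (Y k) + V k := by
  exact theorem_2_1_existence_general (mulVec_injective_of_isUnit hP) hH hF hG V C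
    fun k ↦ by rw [hY, hD, hQp, hP1, hP2]; rfl
end

section
/- Converse direction of Theorem 2.1: If a sequence Y : ℕ → ℝ^m satisfies F · Y_{k+1} = G · Y_k + V_k for all k ≥ 0, then there exists a constant vector C ∈ ℝ^p such that Y_k = Q_p · J_p^k · C + Q · D_k for all k ≥ 0. -/
open Matrix Finset

/-!
Writing `Y = Q Z` and multiplying the equation by `P` decouples it into the two blocks of `Z`. The
top block obeys an explicit recurrence, which is iterated forwards from its initial value `C`. The
bottom block obeys `y k = H y (k + 1) - w k`, which is iterated into the future until nilpotency of
`H` kills the remainder, so it carries no free constant.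
-/

section LinearRecurrence

variable {A M : Type*}

theorem eq_pow_smul_add_sum_of_succ_eq_smul_add [Monoid A] [AddCommMonoid M]
    [DistribMulAction A M] {a : A} {x u : ℕ → M} (hx : ∀ k, x (k + 1) = a • x k + u k) (k : ℕ) :
    x k = a ^ k • x 0 + ∑ i ∈ range k, a ^ (k - i - 1) • u i := by
  induction k with
  | zero => simp
  | succ k ih =>
    have smul_sum_eq : a • ∑ i ∈ range k, a ^ (k - i - 1) • u i =
        ∑ i ∈ range k, a ^ (k + 1 - i - 1) • u i := by
      rw [smul_sum]
      refine sum_congr rfl fun i hi => ?_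
      have exponent_eq : k + 1 - i - 1 = k - i - 1 + 1 := by grind
      rw [exponent_eq, pow_succ', mul_smul]
    calc x (k + 1)
        = a • (a ^ k • x 0 + ∑ i ∈ range k, a ^ (k - i - 1) • u i) + u k := by rw [hx, ← ih]
      _ = a ^ (k + 1) • x 0 + (∑ i ∈ range k, a ^ (k + 1 - i - 1) • u i + u k) := by
        rw [smul_add, smul_sum_eq, smul_smul, ← pow_succ', add_assoc]
      _ = a ^ (k + 1) • x 0 + ∑ i ∈ range (k + 1), a ^ (k + 1 - i - 1) • u i := by
        simp [sum_range_succ]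

theorem eq_pow_smul_sub_sum_of_smul_succ_eq_add [Monoid A] [AddCommGroup M]
    [DistribMulAction A M] {a : A} {y w : ℕ → M} (hy : ∀ k, a • y (k + 1) = y k + w k)
    (n k : ℕ) : y k = a ^ n • y (k + n) - ∑ i ∈ range n, a ^ i • w (k + i) := by
  induction n with
  | zero => simp
  | succ n ih =>
    have pow_succ_smul : a ^ (n + 1) • y (k + (n + 1)) =
        a ^ n • y (k + n) + a ^ n • w (k + n) := by
      rw [pow_succ, mul_smul, ← add_assoc, hy, smul_add]
    rw [sum_range_succ, pow_succ_smul, add_sub_add_right_eq_sub, ← ih]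

theorem eq_neg_sum_of_smul_succ_eq_add_of_pow_eq_zero [Semiring A] [AddCommGroup M]
    [Module A M] {a : A} {n : ℕ} (ha : a ^ n = 0) {y w : ℕ → M}
    (hy : ∀ k, a • y (k + 1) = y k + w k) (k : ℕ) :
    y k = -∑ i ∈ range n, a ^ i • w (k + i) := by
  simpa only [ha, zero_smul, zero_sub] using eq_pow_smul_sub_sum_of_smul_succ_eq_add hy n k

end LinearRecurrence

section BlockMatrix

variable {R l m n o : Type*} [Fintype l] [Fintype m] [Fintype n]

theorem mulVec_sumElim_add_left [Semiring R] (Q : Matrix o (m ⊕ n) R)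
    (a b : m → R) (c : n → R) :
    Q *ᵥ Sum.elim (a + b) c = Q.toCols₁ *ᵥ a + Q *ᵥ Sum.elim b c := by
  rw [← fromCols_toCols Q]
  simp only [fromCols_mulVec_sumElim, toCols₁_fromCols, mulVec_add, add_assoc]

theorem fromBlocks_one_mulVec_eq_fromBlocks_one_mulVec_add_iff [Semiring R]
    [DecidableEq m] [DecidableEq n] {J : Matrix m m R} {H : Matrix n n R}
    {P : Matrix (m ⊕ n) l R} {z z' : m ⊕ n → R} {v : l → R} :
    fromBlocks 1 0 0 H *ᵥ z' = fromBlocks J 0 0 1 *ᵥ z + P *ᵥ v ↔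
      z' ∘ Sum.inl = J *ᵥ (z ∘ Sum.inl) + P.toRows₁ *ᵥ v ∧
        H *ᵥ (z' ∘ Sum.inr) = z ∘ Sum.inr + P.toRows₂ *ᵥ v := by
  rw [← fromRows_toRows P]
  simp only [fromBlocks_mulVec, fromRows_mulVec, one_mulVec, zero_mulVec, add_zero, zero_add,
    ← Sum.elim_add_add, Sum.elim_eq_iff, toRows₁_fromRows, toRows₂_fromRows]

open scoped Matrix.Module in
theorem theorem_2_1_converse_general [Ring R] [Fintype o] [DecidableEq m] [DecidableEq n]
    {F G : Matrix l o R} {P : Matrix (m ⊕ n) l R} {Q : Matrix o (m ⊕ n) R}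
    (hQ : Function.Surjective Q.mulVec) {J : Matrix m m R} {H : Matrix n n R} {N : ℕ}
    (hH : H ^ N = 0) (hF : P * F * Q = fromBlocks 1 0 0 H) (hG : P * G * Q = fromBlocks J 0 0 1)
    {V : ℕ → l → R} {Y : ℕ → o → R} (hY : ∀ k, F *ᵥ Y (k + 1) = G *ᵥ Y k + V k) :
    ∃ C : m → R, ∀ k, Y k = Q.toCols₁ *ᵥ (J ^ k *ᵥ C) + Q *ᵥ Sum.elim
      (∑ i ∈ range k, J ^ (k - i - 1) *ᵥ (P.toRows₁ *ᵥ V i))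
      (-∑ i ∈ range N, H ^ i *ᵥ (P.toRows₂ *ᵥ V (k + i))) := by
  choose Z hZ using fun k => hQ (Y k)
  have block_eq (k : ℕ) :
      fromBlocks 1 0 0 H *ᵥ Z (k + 1) = fromBlocks J 0 0 1 *ᵥ Z k + P *ᵥ V k := by
    simp only [← hF, ← hG, ← mulVec_mulVec, hZ, hY, mulVec_add]
  have blocks (k : ℕ) := fromBlocks_one_mulVec_eq_fromBlocks_one_mulVec_add_iff.mp (block_eq k)
  -- With the `Matrix.Module` action on `m → R`, `A • v` unfolds to `A *ᵥ v`.
  have top_eq (k : ℕ) : Z k ∘ Sum.inl = J ^ k *ᵥ (Z 0 ∘ Sum.inl) +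
      ∑ i ∈ range k, J ^ (k - i - 1) *ᵥ (P.toRows₁ *ᵥ V i) :=
    eq_pow_smul_add_sum_of_succ_eq_smul_add (a := J) (x := fun k => Z k ∘ Sum.inl)
      (u := fun k => P.toRows₁ *ᵥ V k) (fun k => (blocks k).1) k
  have bottom_eq (k : ℕ) : Z k ∘ Sum.inr =
      -∑ i ∈ range N, H ^ i *ᵥ (P.toRows₂ *ᵥ V (k + i)) :=
    eq_neg_sum_of_smul_succ_eq_add_of_pow_eq_zero hH (y := fun k => Z k ∘ Sum.inr)
      (w := fun k => P.toRows₂ *ᵥ V k) (fun k => (blocks k).2) k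
  refine ⟨Z 0 ∘ Sum.inl, fun k => ?_⟩
  rw [← mulVec_sumElim_add_left, ← top_eq, ← bottom_eq, Sum.elim_comp_inl_inr, hZ]

end BlockMatrix

/-- Converse direction of Theorem 2.1: every solution of `F Y_{k+1} = G Y_k + V_k`
has the form `Y_k = Q_p · J_p^k · C + Q · D_k` for some constant `C ∈ ℝ^p`. -/
theorem theorem_2_1_converse
    (p q : ℕ) (hp : 1 ≤ p) (hq : 1 ≤ q)
    (F G P Q : Matrix (Fin p ⊕ Fin q) (Fin p ⊕ Fin q) ℝ)
    (hP : IsUnit P) (hQ : IsUnit Q)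
    (Jp : Matrix (Fin p) (Fin p) ℝ) (qs : ℕ) (Hq : Matrix (Fin q) (Fin q) ℝ)
    (hH : Hq ^ qs = 0)
    (hF : P * F * Q = Matrix.fromBlocks 1 0 0 Hq)
    (hG : P * G * Q = Matrix.fromBlocks Jp 0 0 1)
    (Qp : Matrix (Fin p ⊕ Fin q) (Fin p) ℝ) (hQp : Qp = Q.submatrix id Sum.inl)
    (P1 : Matrix (Fin p) (Fin p ⊕ Fin q) ℝ) (hP1 : P1 = P.submatrix Sum.inl id)
    (P2 : Matrix (Fin q) (Fin p ⊕ Fin q) ℝ) (hP2 : P2 = P.submatrix Sum.inr id)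
    (V : ℕ → (Fin p ⊕ Fin q) → ℝ)
    (D : ℕ → (Fin p ⊕ Fin q) → ℝ)
    (hD : ∀ k, D k = Sum.elim
        (∑ i ∈ Finset.range k, (Jp ^ (k - i - 1)).mulVec (P1.mulVec (V i)))
        (-(∑ i ∈ Finset.range qs, (Hq ^ i).mulVec (P2.mulVec (V (k + i))))))
    (Y : ℕ → (Fin p ⊕ Fin q) → ℝ)
    (hY : ∀ k, F.mulVec (Y (k + 1)) = G.mulVec (Y k) + V k) :
    ∃ C : Fin p → ℝ, ∀ k, Y k = Qp.mulVec ((Jp ^ k).mulVec C) + Q.mulVec (D k) := by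
  subst hQp hP1 hP2
  simp only [hD]
  exact theorem_2_1_converse_general
    (mulVec_surjective_iff_isUnit.mpr hQ) hH hF hG hY
end

section
/- Proposition 2.1: The initial condition Y₀ ∈ ℝ^m is consistent (i.e., there exists a sequence Y : ℕ → ℝ^m with F · Y_{k+1} = G · Y_k + V_k for all k ≥ 0 and Y(0) = Y₀) if and only if there exists C ∈ ℝ^p with Y₀ = Q_p · C + Q · D₀, i.e., Y₀ ∈ colspan(Q_p) + Q·D₀. -/
open Matrix Finset

/-!
In the coordinates `Y = Q x` the system `F Y (k + 1) = G Y k + V k` splits into two independent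
recurrences. The slow part `x (k + 1) = J x k + f k` runs forwards and is solvable from every
initial value. The fast part `H w (k + 1) = w k + g k`, read as `w k = H w (k + 1) - g k`, runs
backwards: iterating it until the power of `H` vanishes expresses `w k` through the inhomogeneity
alone. Hence only the slow component of the initial value is free.
-/

section Recurrences

variable {A M : Type*} [Semiring A]

theorem sum_range_succ_pow_sub_smul [AddCommMonoid M] [Module A M] (a : A) (f : ℕ → M) (k : ℕ) :
    ∑ i ∈ range (k + 1), a ^ (k + 1 - i - 1) • f i =
      a • ∑ i ∈ range k, a ^ (k - i - 1) • f i + f k := by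
  have pow_step : ∀ i ∈ range k, a ^ (k + 1 - i - 1) • f i = a • a ^ (k - i - 1) • f i := by
    intro i hi
    have exponent : k + 1 - i - 1 = k - i - 1 + 1 := by
      have := mem_range.mp hi
      omega
    rw [exponent, pow_succ', mul_smul]
  rw [sum_range_succ, sum_congr rfl pow_step, smul_sum]
  simp

theorem forall_succ_eq_smul_add_iff [AddCommMonoid M] [Module A M] (a : A) (f x : ℕ → M) :
    (∀ k, x (k + 1) = a • x k + f k) ↔
      ∃ c, ∀ k, x k = a ^ k • c + ∑ i ∈ range k, a ^ (k - i - 1) • f i := by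
  constructor
  · refine fun hx ↦ ⟨x 0, fun k ↦ ?_⟩
    induction k with
    | zero => simp
    | succ k ih =>
      rw [hx, sum_range_succ_pow_sub_smul, pow_succ', mul_smul, ← add_assoc, ← smul_add, ← ih]
  · rintro ⟨c, hx⟩ k
    rw [hx, hx, sum_range_succ_pow_sub_smul, pow_succ', mul_smul, ← add_assoc, ← smul_add]

theorem eq_pow_smul_sub_sum_of_smul_succ_eq [AddCommGroup M] [Module A M] {a : A} {g w : ℕ → M}
    (hw : ∀ k, a • w (k + 1) = w k + g k) (k n : ℕ) :
    w k = a ^ n • w (k + n) - ∑ i ∈ range n, a ^ i • g (k + i) := by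
  induction n with
  | zero => simp
  | succ n ih =>
    have backward_step : w (k + n) = a • w (k + n + 1) - g (k + n) := by
      rw [hw, add_sub_cancel_right]
    rw [ih, backward_step, smul_sub, smul_smul, ← pow_succ, sum_range_succ, ← add_assoc k n 1]
    abel

theorem smul_sum_pow_smul_succ_add [AddCommMonoid M] [Module A M] {a : A} {n : ℕ}
    (ha : a ^ n = 0) (g : ℕ → M) (k : ℕ) :
    a • ∑ i ∈ range n, a ^ i • g (k + 1 + i) + g k = ∑ i ∈ range n, a ^ i • g (k + i) := by
  calc
    a • ∑ i ∈ range n, a ^ i • g (k + 1 + i) + g k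
      = ∑ i ∈ range (n + 1), a ^ i • g (k + i) := by
        simp [sum_range_succ', smul_sum, pow_succ', mul_smul, add_assoc, add_comm 1]
    _ = ∑ i ∈ range n, a ^ i • g (k + i) := by simp [sum_range_succ, ha]

theorem forall_smul_succ_eq_add_iff_of_pow_eq_zero [AddCommGroup M] [Module A M] {a : A} {n : ℕ}
    (ha : a ^ n = 0) (g w : ℕ → M) :
    (∀ k, a • w (k + 1) = w k + g k) ↔ ∀ k, w k = -∑ i ∈ range n, a ^ i • g (k + i) := by
  constructor
  · intro hw k
    rw [eq_pow_smul_sub_sum_of_smul_succ_eq hw k n, ha, zero_smul, zero_sub]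
  · intro hw k
    rw [hw, hw, ← smul_sum_pow_smul_succ_add ha g k, smul_neg]
    abel

end Recurrences

section Descriptor

variable {l R ι κ : Type*} [Fintype ι] [Fintype κ]

theorem toCols₁_mulVec [NonUnitalNonAssocSemiring R] (A : Matrix l (ι ⊕ κ) R) (c : ι → R) :
    A.toCols₁ *ᵥ c = A *ᵥ Sum.elim c 0 := by
  ext
  simp [mulVec, dotProduct]

variable [DecidableEq ι] [DecidableEq κ] {F G P Q : Matrix (ι ⊕ κ) (ι ⊕ κ) R}
  {J : Matrix ι ι R} {H : Matrix κ κ R}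

theorem mulVec_eq_mulVec_add_iff_of_fromBlocks [Semiring R] (hP : IsUnit P)
    (hF : P * F * Q = fromBlocks 1 0 0 H) (hG : P * G * Q = fromBlocks J 0 0 1)
    (x x' v : ι ⊕ κ → R) :
    F *ᵥ Q *ᵥ x' = G *ᵥ Q *ᵥ x + v ↔
      x' ∘ Sum.inl = J *ᵥ (x ∘ Sum.inl) + P.toRows₁ *ᵥ v ∧
        H *ᵥ (x' ∘ Sum.inr) = x ∘ Sum.inr + P.toRows₂ *ᵥ v := by
  have hPv : P *ᵥ v = Sum.elim (P.toRows₁ *ᵥ v) (P.toRows₂ *ᵥ v) := by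
    rw [← fromRows_mulVec, fromRows_toRows]
  rw [← (mulVec_injective_of_isUnit hP).eq_iff, mulVec_add, hPv]
  simp only [mulVec_mulVec, ← Matrix.mul_assoc, hF, hG, fromBlocks_mulVec, one_mulVec,
    zero_mulVec, add_zero, zero_add, ← Sum.elim_add_add, Sum.elim_eq_iff]

/-- The inhomogeneous part `D k` of the general solution of `F Y (k + 1) = G Y k + V k`, in the
coordinates `Y = Q x` in which `P F Q` and `P G Q` are block diagonal with slow block `J` and fast
block `H`. The index `ι` labels the slow coordinates and `κ` the fast ones; `n` is a nilpotency
exponent of `H`. -/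
def forcedResponse [Ring R] (P : Matrix (ι ⊕ κ) (ι ⊕ κ) R) (J : Matrix ι ι R) (H : Matrix κ κ R)
    (n : ℕ) (V : ℕ → ι ⊕ κ → R) (k : ℕ) : ι ⊕ κ → R :=
  Sum.elim (∑ i ∈ range k, J ^ (k - i - 1) *ᵥ P.toRows₁ *ᵥ V i)
    (-∑ i ∈ range n, H ^ i *ᵥ P.toRows₂ *ᵥ V (k + i))

theorem forall_mulVec_succ_eq_iff_exists_forcedResponse [Ring R] (hP : IsUnit P) (hQ : IsUnit Q)
    {n : ℕ} (hH : H ^ n = 0) (hF : P * F * Q = fromBlocks 1 0 0 H)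
    (hG : P * G * Q = fromBlocks J 0 0 1) (V Y : ℕ → ι ⊕ κ → R) :
    (∀ k, F *ᵥ Y (k + 1) = G *ᵥ Y k + V k) ↔
      ∃ C, ∀ k, Y k = Q.toCols₁ *ᵥ J ^ k *ᵥ C + Q *ᵥ forcedResponse P J H n V k := by
  obtain ⟨x, rfl⟩ : ∃ x : ℕ → ι ⊕ κ → R, Y = fun k ↦ Q *ᵥ x k := by
    choose x hx using fun k ↦ (IsUnit.smul_bijective hQ).surjective (Y k)
    exact ⟨x, funext fun k ↦ (hx k).symm⟩
  have slow := forall_succ_eq_smul_add_iff J (fun k ↦ P.toRows₁ *ᵥ V k) (fun k ↦ x k ∘ Sum.inl)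
  have fast := forall_smul_succ_eq_add_iff_of_pow_eq_zero hH (fun k ↦ P.toRows₂ *ᵥ V k)
    (fun k ↦ x k ∘ Sum.inr)
  simp only [smul_eq_mulVec] at slow fast
  have coordinates (C : ι → R) (k : ℕ) :
      Q *ᵥ x k = Q.toCols₁ *ᵥ J ^ k *ᵥ C + Q *ᵥ forcedResponse P J H n V k ↔
        x k ∘ Sum.inl = J ^ k *ᵥ C + ∑ i ∈ range k, J ^ (k - i - 1) *ᵥ P.toRows₁ *ᵥ V i ∧
          x k ∘ Sum.inr = -∑ i ∈ range n, H ^ i *ᵥ P.toRows₂ *ᵥ V (k + i) := by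
    rw [toCols₁_mulVec, ← mulVec_add, (mulVec_injective_of_isUnit hQ).eq_iff, forcedResponse,
      ← Sum.elim_add_add, zero_add, ← Sum.elim_eq_iff, Sum.elim_comp_inl_inr]
  simp only [mulVec_eq_mulVec_add_iff_of_fromBlocks hP hF hG, coordinates, forall_and, slow, fast,
    exists_and_right]

theorem proposition_2_1_general [Ring R] (hP : IsUnit P) (hQ : IsUnit Q) {n : ℕ}
    (hH : H ^ n = 0) (hF : P * F * Q = fromBlocks 1 0 0 H) (hG : P * G * Q = fromBlocks J 0 0 1)
    (V : ℕ → ι ⊕ κ → R) (Y₀ : ι ⊕ κ → R) :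
    (∃ Y : ℕ → ι ⊕ κ → R, (∀ k, F *ᵥ Y (k + 1) = G *ᵥ Y k + V k) ∧ Y 0 = Y₀) ↔
      ∃ C, Y₀ = Q.toCols₁ *ᵥ C + Q *ᵥ forcedResponse P J H n V 0 := by
  simp only [forall_mulVec_succ_eq_iff_exists_forcedResponse hP hQ hH hF hG]
  constructor
  · rintro ⟨Y, ⟨C, hY⟩, rfl⟩
    exact ⟨C, by simpa using hY 0⟩
  · rintro ⟨C, rfl⟩
    exact ⟨_, ⟨C, fun _ ↦ rfl⟩, by simp⟩

end Descriptor

/-- Proposition 2.1: the initial condition `Y₀` is consistent iff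
`Y₀ ∈ colspan(Q_p) + Q·D₀`. -/
theorem proposition_2_1
    (p q : ℕ) (hp : 1 ≤ p) (hq : 1 ≤ q)
    (F G P Q : Matrix (Fin p ⊕ Fin q) (Fin p ⊕ Fin q) ℝ)
    (hP : IsUnit P) (hQ : IsUnit Q)
    (Jp : Matrix (Fin p) (Fin p) ℝ) (qs : ℕ) (Hq : Matrix (Fin q) (Fin q) ℝ)
    (hH : Hq ^ qs = 0)
    (hF : P * F * Q = Matrix.fromBlocks 1 0 0 Hq)
    (hG : P * G * Q = Matrix.fromBlocks Jp 0 0 1)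
    (Qp : Matrix (Fin p ⊕ Fin q) (Fin p) ℝ) (hQp : Qp = Q.submatrix id Sum.inl)
    (P1 : Matrix (Fin p) (Fin p ⊕ Fin q) ℝ) (hP1 : P1 = P.submatrix Sum.inl id)
    (P2 : Matrix (Fin q) (Fin p ⊕ Fin q) ℝ) (hP2 : P2 = P.submatrix Sum.inr id)
    (V : ℕ → (Fin p ⊕ Fin q) → ℝ)
    (D : ℕ → (Fin p ⊕ Fin q) → ℝ)
    (hD : ∀ k, D k = Sum.elim
        (∑ i ∈ Finset.range k, (Jp ^ (k - i - 1)).mulVec (P1.mulVec (V i)))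
        (-(∑ i ∈ Finset.range qs, (Hq ^ i).mulVec (P2.mulVec (V (k + i))))))
    (Y₀ : (Fin p ⊕ Fin q) → ℝ) :
    (∃ Y : ℕ → (Fin p ⊕ Fin q) → ℝ,
        (∀ k, F.mulVec (Y (k + 1)) = G.mulVec (Y k) + V k) ∧ Y 0 = Y₀) ↔
      ∃ C : Fin p → ℝ, Y₀ = Qp.mulVec C + Q.mulVec (D 0) := by
  obtain rfl : D = forcedResponse P Jp Hq qs V := by subst hP1 hP2; exact funext hD
  exact hQp ▸ proposition_2_1_general hP hQ hH hF hG V Y₀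
end

section
/- Corollary 3.1: For the homogeneous system (V_k = 0 for all k), the initial condition Y₀ ∈ ℝ^m is consistent (i.e., there exists a sequence Y : ℕ → ℝ^m with F · Y_{k+1} = G · Y_k for all k ≥ 0 and Y(0) = Y₀) if and only if Y₀ lies in the column span of Q_p, i.e., there exists C ∈ ℝ^p with Y₀ = Q_p · C. -/
open Matrix Finset

/-!
Left multiplication of the pencil `(F, G)` by an injective `P` does not change the solutions of
`F Y_{k+1} = G Y_k`, and right multiplication by `Q` is the substitution `Y = Q Z`. So the system
decouples into `U_{k+1} = J U_k`, which can be solved from every initial vector, and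
`H W_{k+1} = W_k`, whose solutions satisfy `W_0 = H ^ n W_n` for all `n` and hence vanish at `0`.
-/

section ImplicitDifferenceSystem

variable {R k l m n : Type*}

/-- `y₀` is a consistent initial condition for the homogeneous implicit difference system
`F Y_{i+1} = G Y_i`: some solution, defined for all times `i : ℕ`, starts at `y₀`. -/
def IsConsistent [NonUnitalNonAssocSemiring R] [Fintype l] (F G : Matrix k l R) (y₀ : l → R) :
    Prop :=
  ∃ Y : ℕ → l → R, (∀ i, F *ᵥ Y (i + 1) = G *ᵥ Y i) ∧ Y 0 = y₀

section Equivalence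

variable [NonUnitalSemiring R] [Fintype l]

theorem isConsistent_mul_left_iff [Fintype k] {P : Matrix m k R}
    (hP : Function.Injective P.mulVec) (F G : Matrix k l R) (y : l → R) :
    IsConsistent (P * F) (P * G) y ↔ IsConsistent F G y := by
  simp only [IsConsistent, ← mulVec_mulVec, hP.eq_iff]

theorem isConsistent_mul_right_iff [Fintype n] {Q : Matrix l n R}
    (hQ : Function.Surjective Q.mulVec) (F G : Matrix k l R) (z : n → R) :
    IsConsistent (F * Q) (G * Q) z ↔ IsConsistent F G (Q *ᵥ z) := by
  simp only [IsConsistent, ← mulVec_mulVec]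
  constructor
  · rintro ⟨Z, hZ, rfl⟩
    exact ⟨fun i ↦ Q *ᵥ Z i, hZ, rfl⟩
  · rintro ⟨Y, hY, hY₀⟩
    choose Z hZ using fun i ↦ hQ (Y i)
    -- `Q` need not be injective, so the lift of `Y 0` has to be replaced by `z`.
    have hQZ (i : ℕ) : Q *ᵥ Function.update Z 0 z i = Y i := by
      cases i with
      | zero => simp [hY₀]
      | succ i => simp [hZ]
    exact ⟨Function.update Z 0 z, by simpa only [hQZ] using hY, Function.update_self ..⟩

end Equivalence

theorem isConsistent_fromBlocks_diagonal_iff [NonUnitalNonAssocSemiring R] [Fintype m] [Fintype n]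
    (A A' : Matrix k m R) (B B' : Matrix l n R) (z : m ⊕ n → R) :
    IsConsistent (fromBlocks A 0 0 B) (fromBlocks A' 0 0 B') z ↔
      IsConsistent A A' (z ∘ Sum.inl) ∧ IsConsistent B B' (z ∘ Sum.inr) := by
  simp only [IsConsistent, fromBlocks_mulVec, zero_mulVec, add_zero, zero_add, Sum.elim_eq_iff]
  constructor
  · rintro ⟨Z, hZ, rfl⟩
    exact ⟨⟨fun i ↦ Z i ∘ Sum.inl, fun i ↦ (hZ i).1, rfl⟩,
      ⟨fun i ↦ Z i ∘ Sum.inr, fun i ↦ (hZ i).2, rfl⟩⟩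
  · rintro ⟨⟨U, hU, hU₀⟩, ⟨W, hW, hW₀⟩⟩
    exact ⟨fun i ↦ Sum.elim (U i) (W i), fun i ↦ ⟨hU i, hW i⟩,
      by simp only [hU₀, hW₀, Sum.elim_comp_inl_inr]⟩

section Square

variable [Semiring R] [Fintype n] [DecidableEq n]

theorem isConsistent_one_left (J : Matrix n n R) (y : n → R) : IsConsistent 1 J y :=
  ⟨fun i ↦ J ^ i *ᵥ y, fun i ↦ by simp only [mulVec_mulVec, one_mul, pow_succ'], by simp⟩

theorem pow_mulVec_apply_eq_apply_zero {H : Matrix n n R} {W : ℕ → n → R}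
    (hW : ∀ i, H *ᵥ W (i + 1) = W i) (i : ℕ) : H ^ i *ᵥ W i = W 0 := by
  induction i with
  | zero => simp
  | succ i ih => rw [pow_succ, ← mulVec_mulVec, hW, ih]

theorem isConsistent_one_right_iff {H : Matrix n n R} (hH : IsNilpotent H) {y : n → R} :
    IsConsistent H 1 y ↔ y = 0 := by
  simp only [IsConsistent, one_mulVec]
  constructor
  · rintro ⟨W, hW, rfl⟩
    obtain ⟨s, hs⟩ := hH
    rw [← pow_mulVec_apply_eq_apply_zero hW s, hs, zero_mulVec]
  · rintro rfl
    exact ⟨0, fun _ ↦ mulVec_zero H, rfl⟩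

end Square

theorem submatrix_inl_mulVec [NonUnitalNonAssocSemiring R] [Fintype m] [Fintype n]
    (Q : Matrix l (m ⊕ n) R) (c : m → R) :
    Q.submatrix id Sum.inl *ᵥ c = Q *ᵥ Sum.elim c 0 := by
  ext
  simp [mulVec, dotProduct]

theorem corollary_3_1_general [Semiring R] [Fintype k] [Fintype l] [Fintype m] [Fintype n]
    [DecidableEq m] [DecidableEq n] {F G : Matrix k l R} {P : Matrix (m ⊕ n) k R}
    {Q : Matrix l (m ⊕ n) R} {J : Matrix m m R} {H : Matrix n n R}
    (hP : Function.Injective P.mulVec) (hQ : Function.Surjective Q.mulVec) (hH : IsNilpotent H)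
    (hF : P * F * Q = fromBlocks 1 0 0 H) (hG : P * G * Q = fromBlocks J 0 0 1) (y : l → R) :
    IsConsistent F G y ↔ ∃ c : m → R, y = Q.submatrix id Sum.inl *ᵥ c := by
  have consistent_mulVec_iff (z : m ⊕ n → R) : IsConsistent F G (Q *ᵥ z) ↔ z ∘ Sum.inr = 0 := by
    rw [← isConsistent_mul_left_iff hP, ← isConsistent_mul_right_iff hQ, hF, hG,
      isConsistent_fromBlocks_diagonal_iff, isConsistent_one_right_iff hH,
      and_iff_right (isConsistent_one_left J _)]
  constructor
  · obtain ⟨z, rfl⟩ := hQ y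
    intro hz
    refine ⟨z ∘ Sum.inl, ?_⟩
    rw [submatrix_inl_mulVec, ← (consistent_mulVec_iff z).mp hz, Sum.elim_comp_inl_inr]
  · rintro ⟨c, rfl⟩
    rw [submatrix_inl_mulVec, consistent_mulVec_iff, Sum.elim_comp_inr]

end ImplicitDifferenceSystem

/-- Corollary 3.1: for the homogeneous system, `Y₀` is consistent iff
`Y₀ ∈ colspan(Q_p)`. -/
theorem corollary_3_1
    (p q : ℕ) (hp : 1 ≤ p) (hq : 1 ≤ q)
    (F G P Q : Matrix (Fin p ⊕ Fin q) (Fin p ⊕ Fin q) ℝ)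
    (hP : IsUnit P) (hQ : IsUnit Q)
    (Jp : Matrix (Fin p) (Fin p) ℝ) (qs : ℕ) (Hq : Matrix (Fin q) (Fin q) ℝ)
    (hH : Hq ^ qs = 0)
    (hF : P * F * Q = Matrix.fromBlocks 1 0 0 Hq)
    (hG : P * G * Q = Matrix.fromBlocks Jp 0 0 1)
    (Qp : Matrix (Fin p ⊕ Fin q) (Fin p) ℝ) (hQp : Qp = Q.submatrix id Sum.inl)
    (Y₀ : (Fin p ⊕ Fin q) → ℝ) :
    (∃ Y : ℕ → (Fin p ⊕ Fin q) → ℝ,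
        (∀ k, F.mulVec (Y (k + 1)) = G.mulVec (Y k)) ∧ Y 0 = Y₀) ↔
      ∃ C : Fin p → ℝ, Y₀ = Qp.mulVec C := by
  subst hQp
  exact corollary_3_1_general (mulVec_injective_of_isUnit hP) (mulVec_surjective_iff_isUnit.mpr hQ)
    ⟨qs, hH⟩ hF hG Y₀
end

section
/- Non-solvability for non-consistent initial data (proof of Theorem 3.1): if Q_p ∈ ℝ^{m×p} has full column rank p with m > p, and Y₀ ∈ ℝ^m does not lie in colspan(Q_p), then the overdetermined linear system Q_p · C = Y₀ has no solution C ∈ ℝ^p, and consequently for the homogeneous system F · Y_{k+1} = G · Y_k there is no solution sequence Y with Y(0) = Y₀. -/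
open Matrix Finset

/-!
Write `Y k = Q z k`. The lower block row of the transformed system says that the lower component
`w` of `z` satisfies `H w (k + 1) = w k`, hence `w 0 = H ^ n w n` for every `n`, which vanishes as
`H` is nilpotent. So `Y 0 = Q z 0` only involves the columns of `Q` in the upper block.
-/

section BackwardOrbit

variable {κ R : Type*} [Fintype κ] [DecidableEq κ] [Semiring R]
  {H : Matrix κ κ R} {w : ℕ → κ → R}

theorem pow_mulVec_add_of_mulVec_succ (hw : ∀ k, H *ᵥ w (k + 1) = w k) (k n : ℕ) :
    (H ^ n) *ᵥ w (k + n) = w k := by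
  induction n with
  | zero => rw [pow_zero, one_mulVec, add_zero]
  | succ n ih => rw [pow_succ, ← mulVec_mulVec, ← add_assoc, hw, ih]

theorem eq_zero_of_isNilpotent_of_mulVec_succ (hH : IsNilpotent H)
    (hw : ∀ k, H *ᵥ w (k + 1) = w k) (k : ℕ) : w k = 0 := by
  obtain ⟨n, hn⟩ := hH
  rw [← pow_mulVec_add_of_mulVec_succ hw k n, hn, zero_mulVec]

end BackwardOrbit

section Blocks

variable {m ι κ α R : Type*} [Fintype ι] [Fintype κ]

theorem mulVec_eq_submatrix_inl_mulVec [NonUnitalNonAssocSemiring R] (Q : Matrix m (ι ⊕ κ) R)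
    {z : ι ⊕ κ → R} (hz : z ∘ Sum.inr = 0) :
    Q *ᵥ z = Q.submatrix id Sum.inl *ᵥ (z ∘ Sum.inl) := by
  have lower_eq_zero (j : κ) : z (Sum.inr j) = 0 := congrFun hz j
  ext i
  simp [mulVec, dotProduct, lower_eq_zero]

theorem mulVec_comp_inr_of_fromBlocks_mulVec_eq [DecidableEq κ] [NonAssocSemiring R]
    {A J : Matrix α ι R} {B K : Matrix α κ R} {H : Matrix κ κ R} {z z' : ι ⊕ κ → R}
    (h : fromBlocks A B 0 H *ᵥ z' = fromBlocks J K 0 1 *ᵥ z) :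
    H *ᵥ (z' ∘ Sum.inr) = z ∘ Sum.inr := by
  simpa only [fromBlocks_mulVec, Sum.elim_comp_inr, zero_mulVec, one_mulVec, zero_add]
    using congrArg (· ∘ Sum.inr) h

end Blocks

theorem mul_mul_mulVec_eq_of_mulVec_eq {l m n o R : Type*} [Fintype m] [Fintype n] [Fintype o]
    [NonUnitalSemiring R] {F G : Matrix n m R} (P : Matrix l n R) {Q : Matrix m o R}
    {z z' : o → R} (h : F *ᵥ (Q *ᵥ z') = G *ᵥ (Q *ᵥ z)) :
    (P * F * Q) *ᵥ z' = (P * G * Q) *ᵥ z := by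
  simp only [← mulVec_mulVec, h]

theorem non_consistent_no_solution_general {m n ι κ α R : Type*}
    [Fintype m] [Fintype n] [Fintype ι] [Fintype κ] [DecidableEq κ] [Semiring R]
    {F G : Matrix n m R} {P : Matrix (α ⊕ κ) n R} {Q : Matrix m (ι ⊕ κ) R}
    (hQ : Function.Surjective Q.mulVec)
    {A J : Matrix α ι R} {B K : Matrix α κ R} {H : Matrix κ κ R} (hH : IsNilpotent H)
    (hF : P * F * Q = fromBlocks A B 0 H) (hG : P * G * Q = fromBlocks J K 0 1)
    {Y₀ : m → R} (hY₀ : ¬ ∃ C : ι → R, Y₀ = Q.submatrix id Sum.inl *ᵥ C) :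
    ¬ ∃ Y : ℕ → m → R, (∀ k, F *ᵥ Y (k + 1) = G *ᵥ Y k) ∧ Y 0 = Y₀ := by
  rintro ⟨Y, hY, rfl⟩
  choose z hz using fun k => hQ (Y k)
  have lower_recurrence (k : ℕ) : H *ᵥ (z (k + 1) ∘ Sum.inr) = z k ∘ Sum.inr := by
    apply mulVec_comp_inr_of_fromBlocks_mulVec_eq
    rw [← hF, ← hG]
    exact mul_mul_mulVec_eq_of_mulVec_eq P (by rw [hz, hz, hY])
  have lower_eq_zero : z 0 ∘ Sum.inr = 0 :=
    eq_zero_of_isNilpotent_of_mulVec_succ (w := fun k => z k ∘ Sum.inr) hH lower_recurrence 0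
  exact hY₀ ⟨z 0 ∘ Sum.inl, by rw [← hz 0, mulVec_eq_submatrix_inl_mulVec Q lower_eq_zero]⟩

/-- Non-solvability for non-consistent initial data: if `Y₀ ∉ colspan(Q_p)` then
`Q_p C = Y₀` has no solution and the homogeneous initial value problem has no solution. -/
theorem non_consistent_no_solution
    (p q : ℕ) (hp : 1 ≤ p) (hq : 1 ≤ q)
    (F G P Q : Matrix (Fin p ⊕ Fin q) (Fin p ⊕ Fin q) ℝ)
    (hP : IsUnit P) (hQ : IsUnit Q)
    (Jp : Matrix (Fin p) (Fin p) ℝ) (qs : ℕ) (Hq : Matrix (Fin q) (Fin q) ℝ)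
    (hH : Hq ^ qs = 0)
    (hF : P * F * Q = Matrix.fromBlocks 1 0 0 Hq)
    (hG : P * G * Q = Matrix.fromBlocks Jp 0 0 1)
    (Qp : Matrix (Fin p ⊕ Fin q) (Fin p) ℝ) (hQp : Qp = Q.submatrix id Sum.inl)
    (Y₀ : (Fin p ⊕ Fin q) → ℝ)
    (hY₀ : ¬ ∃ C : Fin p → ℝ, Y₀ = Qp.mulVec C) :
    (¬ ∃ C : Fin p → ℝ, Qp.mulVec C = Y₀) ∧
      ¬ ∃ Y : ℕ → (Fin p ⊕ Fin q) → ℝ,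
          (∀ k, F.mulVec (Y (k + 1)) = G.mulVec (Y k)) ∧ Y 0 = Y₀ := by
  subst hQp
  exact ⟨fun ⟨C, hC⟩ => hY₀ ⟨C, hC.symm⟩,
    non_consistent_no_solution_general (mulVec_surjective_iff_isUnit.2 hQ) ⟨qs, hH⟩ hF hG hY₀⟩
end
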